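/- The function φ is not monotone. More precisely, for every integer n ≥ 6, setting n₁ = C(n,3), n₂ = C(n,3) + 1, and n₃ = C(n+1,3), we have n₁ < n₂ < n₃, φ(n₁) = n, φ(n₂) ≤ n − 1, and φ(n₃) = n + 1; hence φ(n₂) < φ(n₁) < φ(n₃). -/

import Mathlib

open Finset Matrix

/-- The sign `[T : e]` of an edge `e` in a triangle `T`. -/
noncomputable def triSign (T e : Finset ℕ) : ℝ :=
  if e ⊆ T ∧ e.card = 2 ∧ T.card = 3 then
    if (T \ e).max = T.max ∨ (T \ e).min = T.min then 1 else -1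
  else 0

/-- A triangle family: a nonempty finite set of 3-element subsets of ℕ. -/
def IsTriFam (F : Finset (Finset ℕ)) : Prop :=
  F.Nonempty ∧ ∀ T ∈ F, T.card = 3

/-- The edges of the support graph of a triangle family. -/
def edgesOf (F : Finset (Finset ℕ)) : Finset (Finset ℕ) :=
  F.biUnion fun T => T.powersetCard 2

/-- The vertices of the support graph of a triangle family. -/
def vertsOf (F : Finset (Finset ℕ)) : Finset ℕ :=
  F.biUnion id

/-- The signed edge-triangle incidence matrix of a triangle family. -/
noncomputable def delta1 (F : Finset (Finset ℕ)) :
    Matrix {T // T ∈ F} {e // e ∈ edgesOf F} ℝ :=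
  Matrix.of fun T e => triSign T.1 e.1

/-- The smallest positive eigenvalue of a matrix. -/
noncomputable def lambdaMinPos {m : Type*} [Fintype m] (M : Matrix m m ℝ) : ℝ :=
  sInf {μ : ℝ | 0 < μ ∧ ∃ v : m → ℝ, v ≠ 0 ∧ M.mulVec v = μ • v}

/-- `λ(𝒯)`: the smallest positive eigenvalue of `δ₁(𝒯)ᵀ δ₁(𝒯)`. -/
noncomputable def lam (F : Finset (Finset ℕ)) : ℝ :=
  lambdaMinPos ((delta1 F)ᵀ * delta1 F)

/-- The neighborhood of `x` in the support graph `Γ₀(F)`. -/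
def nbrs (F : Finset (Finset ℕ)) (x : ℕ) : Finset ℕ :=
  (vertsOf F).filter fun y => x ≠ y ∧ ∃ T ∈ F, x ∈ T ∧ y ∈ T

/-- `φ(t)`: the maximum of `λ(𝒯)` over triangle families with `|𝒯| = t`. -/
noncomputable def phi (t : ℕ) : ℝ :=
  sSup {r : ℝ | ∃ F : Finset (Finset ℕ), IsTriFam F ∧ F.card = t ∧ lam F = r}

/-- `Λ(t) = max_{1 ≤ s ≤ t} φ(s)`. -/
noncomputable def Lam (t : ℕ) : ℝ :=
  sSup {r : ℝ | ∃ s : ℕ, 1 ≤ s ∧ s ≤ t ∧ phi s = r}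

/-- `H(n) = min{ s ≥ 1 : φ(C(n,3)+s) > n - 1 }`. -/
noncomputable def Hfun (n : ℕ) : ℕ :=
  sInf {s : ℕ | 1 ≤ s ∧ (n : ℝ) - 1 < phi (n.choose 3 + s)}

/-- The triangle family `𝒯_{c,b}`: all 3-cliques of `K_c ∨ (b isolated vertices)`. -/
def Tcb (c b : ℕ) : Finset (Finset ℕ) :=
  ((Finset.Icc 1 c).powersetCard 3) ∪
    (Finset.Icc (c+1) (c+b)).biUnion
      (fun i => ((Finset.Icc 1 c).powersetCard 2).image (fun p => insert i p))

/-!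
If `M` is positive semidefinite with smallest positive eigenvalue `μ`, then `M² - μ M` is positive
semidefinite. For `M = δ₁ᵀ δ₁` and an edge `e` lying in `d` triangles, the diagonal entries at `e`
are `M e e = d` and `M² e e = d² + 2d`: each of the `d` triangles contributes two off-diagonal
entries `±1`, and distinct triangles contribute at distinct edges. Hence `μ ≤ d + 2`.

So if `λ > k + 1`, every edge lies in at least `k` triangles. Then there are `N ≥ k + 2` vertices,
each of degree at least `k + 1`, and double counting gives `N (k + 1) k ≤ 6 t` for the number `t` of
triangles. This forces `t ≥ C(k + 2, 3)`, and once `t > C(k + 2, 3)` a further vertex is needed,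
which forces the larger bound `6 t ≥ (k + 3) (k + 1) k`. Thus `φ` drops just after `C(n, 3)`.

The value `n` at `C(n, 3)` is attained by all triples of an `n`-set, for which
`δ₁ᵀ δ₁ + δ₀ δ₀ᵀ = n` and `δ₁ δ₀ = 0`, hence `M² = n M`.
-/

section Spectrum

variable {m : Type*} [Fintype m] {M : Matrix m m ℝ} {c : ℝ}

lemma lambdaMinPos_le {v : m → ℝ} (hc : 0 < c) (hv : v ≠ 0) (h : M *ᵥ v = c • v) :
    lambdaMinPos M ≤ c :=
  csInf_le ⟨0, fun _ hμ => hμ.1.le⟩ ⟨hc, v, hv, h⟩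

lemma lambdaMinPos_mul_le_mul_self_of_mem_spectrum [DecidableEq m] (hM : M.PosSemidef)
    (hc : c ∈ spectrum ℝ M) : lambdaMinPos M * c ≤ c * c := by
  have hc_nonneg : 0 ≤ c := by
    obtain ⟨i, rfl⟩ := hM.isHermitian.spectrum_real_eq_range_eigenvalues ▸ hc
    exact hM.eigenvalues_nonneg i
  rcases hc_nonneg.eq_or_lt with rfl | hc_pos
  · simp
  · rw [← Matrix.spectrum_toLin', ← Module.End.hasEigenvalue_iff_mem_spectrum] at hc
    obtain ⟨v, hv⟩ := hc.exists_hasEigenvector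
    exact mul_le_mul_of_nonneg_right (lambdaMinPos_le hc_pos hv.2 hv.apply_eq_smul) hc_nonneg

open scoped MatrixOrder in
lemma posSemidef_mul_self_sub_lambdaMinPos_smul (hM : M.PosSemidef) :
    (M * M - lambdaMinPos M • M).PosSemidef := by
  classical
  have hM' : IsSelfAdjoint M := hM.isHermitian
  have h_cfc : cfc (fun x : ℝ => x * x - lambdaMinPos M * x) M = M * M - lambdaMinPos M • M := by
    rw [cfc_sub .., cfc_mul .., cfc_const_mul .., cfc_id' ℝ M]
  rw [← h_cfc, ← Matrix.nonneg_iff_posSemidef]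
  exact cfc_nonneg fun x hx =>
    sub_nonneg.2 (lambdaMinPos_mul_le_mul_self_of_mem_spectrum hM hx)

lemma lambdaMinPos_eq_of_mul_self_eq_smul (hc : 0 < c) (hM : M ≠ 0) (h : M * M = c • M) :
    lambdaMinPos M = c := by
  classical
  have h_vec (v : m → ℝ) : M *ᵥ M *ᵥ v = c • M *ᵥ v := by
    rw [mulVec_mulVec, h, smul_mulVec]
  obtain ⟨i, hi⟩ : ∃ i, M *ᵥ Pi.single i 1 ≠ 0 := by
    by_contra! h_zero
    exact hM (ext_of_mulVec_single fun i => by rw [h_zero, zero_mulVec])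
  refine le_antisymm (lambdaMinPos_le hc hi (h_vec _)) (le_csInf ⟨c, hc, _, hi, h_vec _⟩ ?_)
  rintro μ ⟨hμ, v, hv, hMv⟩
  have h_smul : (μ * μ) • v = (c * μ) • v := by
    simpa only [hMv, mulVec_smul, smul_smul] using h_vec v
  exact (mul_right_cancel₀ hμ.ne' (smul_left_injective ℝ hv h_smul)).ge

end Spectrum

section Signs

variable {T e : Finset ℕ} {x y z : ℕ}

lemma triSign_of_not_subset (h : ¬ e ⊆ T) : triSign T e = 0 :=
  if_neg fun h' => h h'.1

lemma triSign_of_card_ne (h : #T ≠ 3) : triSign T e = 0 :=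
  if_neg fun h' => h h'.2.2

lemma triSign_mul_self (hT : #T = 3) (he : #e = 2) (h : e ⊆ T) :
    triSign T e * triSign T e = 1 := by
  rw [triSign, if_pos ⟨h, he, hT⟩]
  split_ifs <;> norm_num

lemma triSign_insert_pair (hxy : x ≠ y) (hxz : x ≠ z) (hyz : y ≠ z) :
    triSign {x, y, z} {x, y} = if (z < x ↔ z < y) then 1 else -1 := by
  have h_sub : ({x, y} : Finset ℕ) ⊆ {x, y, z} := by grind
  have h_sdiff : ({x, y, z} : Finset ℕ) \ {x, y} = {z} := by grind
  have h_max : ({z} : Finset ℕ).max = ({x, y, z} : Finset ℕ).max ↔ x < z ∧ y < z := by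
    simp only [max_insert, max_singleton]
    norm_cast
    omega
  have h_min : ({z} : Finset ℕ).min = ({x, y, z} : Finset ℕ).min ↔ z < x ∧ z < y := by
    simp only [min_insert, min_singleton]
    norm_cast
    omega
  rw [triSign, if_pos ⟨h_sub, card_pair hxy, card_eq_three.2 ⟨x, y, z, hxy, hxz, hyz, rfl⟩⟩,
    h_sdiff]
  refine if_congr ?_ rfl rfl
  rw [h_max, h_min]
  omega

/-- The sign `[e : x]` of a vertex `x` in an edge `e`: `1` at the larger endpoint, `-1` at the
smaller one, and `0` away from `e`. -/
noncomputable def edgeSign (e : Finset ℕ) (x : ℕ) : ℝ :=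
  if x ∈ e then if ∀ y ∈ e, y ≤ x then 1 else -1 else 0

lemma edgeSign_of_notMem (h : x ∉ e) : edgeSign e x = 0 :=
  if_neg h

lemma edgeSign_mul_self (h : x ∈ e) : edgeSign e x * edgeSign e x = 1 := by
  rw [edgeSign, if_pos h]
  split_ifs <;> norm_num

lemma edgeSign_pair (h : x ≠ y) : edgeSign {x, y} x = if y < x then 1 else -1 := by
  simp [edgeSign, h.symm.le_iff_lt]

lemma triSign_mul_edgeSign_add (hxy : x ≠ y) (hxz : x ≠ z) (hyz : y ≠ z) :
    triSign {x, y, z} {x, y} * edgeSign {x, y} x +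
      triSign {x, y, z} {x, z} * edgeSign {x, z} x = 0 := by
  have h_comm : ({x, y, z} : Finset ℕ) = {x, z, y} := by grind
  rw [triSign_insert_pair hxy hxz hyz, h_comm, triSign_insert_pair hxz hxy hyz.symm,
    edgeSign_pair hxy, edgeSign_pair hxz]
  grind

lemma triSign_mul_triSign_add_edgeSign_mul_edgeSign (hxy : x ≠ y) (hxz : x ≠ z)
    (hyz : y ≠ z) :
    triSign {x, y, z} {x, y} * triSign {x, y, z} {x, z} +
      edgeSign {x, y} x * edgeSign {x, z} x = 0 := by
  have h_sum := triSign_mul_edgeSign_add hxy hxz hyz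
  have h_tri := triSign_mul_self (T := {x, y, z}) (card_eq_three.2 ⟨x, y, z, hxy, hxz, hyz, rfl⟩)
    (card_pair hxy) (by grind)
  have h_edge := edgeSign_mul_self (mem_insert_self x {z})
  linear_combination triSign {x, y, z} {x, y} * edgeSign {x, z} x * h_sum -
    edgeSign {x, y} x * edgeSign {x, z} x * h_tri -
    triSign {x, y, z} {x, y} * triSign {x, y, z} {x, z} * h_edge

end Signs

section Edges

variable {F : Finset (Finset ℕ)} {V T e e' : Finset ℕ} {x : ℕ}

lemma exists_eq_pair_of_mem (he : #e = 2) (hx : x ∈ e) : ∃ y, x ≠ y ∧ e = {x, y} := by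
  obtain ⟨a, b, hab, rfl⟩ := card_eq_two.1 he
  rcases mem_insert.1 hx with rfl | hx
  · exact ⟨b, hab, rfl⟩
  · exact ⟨a, by grind, by grind⟩

lemma exists_eq_triple_of_mem (hT : #T = 3) (hx : x ∈ T) :
    ∃ y z, x ≠ y ∧ x ≠ z ∧ y ≠ z ∧ T = {x, y, z} := by
  obtain ⟨y, z, hyz, h_erase⟩ := card_eq_two.1 ((card_erase_of_mem hx).trans (by rw [hT]))
  have hx_notMem : x ∉ ({y, z} : Finset ℕ) := h_erase ▸ notMem_erase x T
  exact ⟨y, z, by grind, by grind, hyz, by rw [← h_erase, insert_erase hx]⟩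

lemma union_eq_of_pair_subset (hT : #T = 3) (he : #e = 2) (he' : #e' = 2) (hne : e ≠ e')
    (h : e ⊆ T) (h' : e' ⊆ T) : e ∪ e' = T := by
  refine eq_of_subset_of_card_le (union_subset h h') ?_
  have h_ssub : e ⊂ e ∪ e' := subset_union_left.ssubset_of_ne fun h_eq =>
    hne (eq_of_subset_of_card_le (union_eq_left.1 h_eq.symm) (by lia)).symm
  have := card_lt_card h_ssub
  lia

lemma mem_edgesOf : e ∈ edgesOf F ↔ (∃ T ∈ F, e ⊆ T) ∧ #e = 2 := by
  simp only [edgesOf, mem_biUnion, mem_powersetCard, ← and_assoc, exists_and_right]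

lemma card_of_mem_edgesOf (he : e ∈ edgesOf F) : #e = 2 :=
  (mem_edgesOf.1 he).2

lemma subset_vertsOf (hT : T ∈ F) : T ⊆ vertsOf F :=
  subset_biUnion_of_mem id hT

lemma subset_vertsOf_of_mem_edgesOf (he : e ∈ edgesOf F) : e ⊆ vertsOf F :=
  have ⟨⟨_, hT, heT⟩, _⟩ := mem_edgesOf.1 he
  heT.trans (subset_vertsOf hT)

lemma edgesOf_nonempty (hF : IsTriFam F) : (edgesOf F).Nonempty := by
  obtain ⟨T, hT⟩ := hF.1
  obtain ⟨e, heT, he⟩ := exists_subset_card_eq (show 2 ≤ #T by rw [hF.2 T hT]; norm_num)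
  exact ⟨e, mem_edgesOf.2 ⟨⟨T, hT, heT⟩, he⟩⟩

/-- The degree of a vertex set `e`: the number of triangles of `F` containing `e`. It is used for
edges `e`, where it is the degree of `e` in the 2-dimensional complex spanned by `F`. -/
def edgeDegree (F : Finset (Finset ℕ)) (e : Finset ℕ) : ℕ :=
  #{T ∈ F | e ⊆ T}

lemma edgeDegree_pos (he : e ∈ edgesOf F) : 0 < edgeDegree F e :=
  have ⟨⟨T, hT, heT⟩, _⟩ := mem_edgesOf.1 he
  card_pos.2 ⟨T, mem_filter.2 ⟨hT, heT⟩⟩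

lemma edgeDegree_eq_card_apexes (hF : ∀ T ∈ F, #T = 3) (hV : ∀ T ∈ F, T ⊆ V) (he : #e = 2) :
    edgeDegree F e = #{z ∈ V \ e | insert z e ∈ F} := by
  have h_inj : Set.InjOn (insert · e) ({z ∈ V \ e | insert z e ∈ F} : Finset ℕ) := fun z hz w _ h =>
    (insert_inj (by grind)).1 h
  rw [edgeDegree, ← card_image_of_injOn h_inj]
  congr 1
  ext T
  simp only [mem_filter, mem_image, mem_sdiff]
  constructor
  · rintro ⟨hT, heT⟩
    obtain ⟨z, hz⟩ := card_eq_one.1 <|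
      (card_sdiff_of_subset heT).trans (by rw [hF T hT, he])
    have h_insert : insert z e = T := by
      rw [insert_eq, ← hz, sdiff_union_of_subset heT]
    have hzT : z ∈ T \ e := hz ▸ mem_singleton_self z
    rw [mem_sdiff] at hzT
    exact ⟨z, ⟨⟨hV T hT hzT.1, hzT.2⟩, h_insert ▸ hT⟩, h_insert⟩
  · rintro ⟨z, ⟨_, hz⟩, rfl⟩
    exact ⟨hz, subset_insert z e⟩

lemma edgeDegree_add_two_le_card_vertsOf (hF : ∀ T ∈ F, #T = 3) (he : e ∈ edgesOf F) :
    edgeDegree F e + 2 ≤ #(vertsOf F) := by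
  have he_card := card_of_mem_edgesOf he
  rw [edgeDegree_eq_card_apexes hF (fun _ => subset_vertsOf) he_card, ← he_card,
    ← card_sdiff_add_card_eq_card (subset_vertsOf_of_mem_edgesOf he)]
  gcongr
  exact filter_subset _ _

lemma edgeDegree_add_one_le_card_incident (hF : ∀ T ∈ F, #T = 3) (he : e ∈ edgesOf F) (hx : x ∈ e) :
    edgeDegree F e + 1 ≤ #{e' ∈ edgesOf F | x ∈ e'} := by
  have he_card := card_of_mem_edgesOf he
  have h_le : edgeDegree F e ≤ #({e' ∈ edgesOf F | x ∈ e'}.erase e) := by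
    rw [edgeDegree_eq_card_apexes hF (fun _ => subset_vertsOf) he_card]
    refine card_le_card_of_injOn (fun z => {x, z}) (fun z hz => ?_)
      fun z hz w _ (h : ({x, z} : Finset ℕ) = {x, w}) => ?_
    · simp only [coe_filter, Set.mem_ofPred_eq, mem_sdiff] at hz
      have h_edge : {x, z} ∈ edgesOf F :=
        mem_edgesOf.2 ⟨⟨_, hz.2, by grind⟩, card_pair (by grind)⟩
      exact mem_erase.2 ⟨by grind, mem_filter.2 ⟨h_edge, by simp⟩⟩
    · have hz_mem : z ∈ ({x, w} : Finset ℕ) := h ▸ mem_insert_of_mem (mem_singleton_self z)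
      grind
  have h_mem : e ∈ {e' ∈ edgesOf F | x ∈ e'} := mem_filter.2 ⟨he, hx⟩
  have := card_erase_add_one h_mem
  lia

lemma card_edgesOf_mul_le {k : ℕ} (hF : ∀ T ∈ F, #T = 3)
    (hk : ∀ e ∈ edgesOf F, k ≤ edgeDegree F e) : #(edgesOf F) * k ≤ #F * 3 := by
  refine card_mul_le_card_mul (fun e T : Finset ℕ => e ⊆ T) hk fun T hT => ?_
  calc #{e ∈ edgesOf F | e ⊆ T} ≤ #(T.powersetCard 2) := card_le_card fun e he => by
        rw [mem_filter] at he
        exact mem_powersetCard.2 ⟨he.2, card_of_mem_edgesOf he.1⟩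
    _ = 3 := by rw [card_powersetCard, hF T hT]; rfl

lemma card_vertsOf_mul_le {k : ℕ} (hF : ∀ T ∈ F, #T = 3)
    (hk : ∀ e ∈ edgesOf F, k ≤ edgeDegree F e) :
    #(vertsOf F) * (k + 1) ≤ #(edgesOf F) * 2 := by
  refine card_mul_le_card_mul (· ∈ ·) (fun x hx => ?_) fun e he => ?_
  · obtain ⟨T, hT, hxT⟩ := mem_biUnion.1 hx
    obtain ⟨y, z, hxy, -, -, rfl⟩ := exists_eq_triple_of_mem (hF T hT) hxT
    have he : {x, y} ∈ edgesOf F := mem_edgesOf.2 ⟨⟨_, hT, by grind⟩, card_pair hxy⟩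
    exact (Nat.succ_le_succ (hk _ he)).trans
      (edgeDegree_add_one_le_card_incident hF he (mem_insert_self x {y}))
  · exact (card_le_card fun x hx => (mem_filter.1 hx).2).trans (card_of_mem_edgesOf he).le

lemma card_vertsOf_mul_mul_le {k : ℕ} (hF : ∀ T ∈ F, #T = 3)
    (hk : ∀ e ∈ edgesOf F, k ≤ edgeDegree F e) :
    #(vertsOf F) * (k + 1) * k ≤ 6 * #F :=
  calc #(vertsOf F) * (k + 1) * k ≤ #(edgesOf F) * 2 * k :=
        Nat.mul_le_mul_right k (card_vertsOf_mul_le hF hk)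
    _ = 2 * (#(edgesOf F) * k) := by ring
    _ ≤ 2 * (#F * 3) := Nat.mul_le_mul_left 2 (card_edgesOf_mul_le hF hk)
    _ = 6 * #F := by ring

lemma card_le_choose_card_vertsOf (hF : ∀ T ∈ F, #T = 3) : #F ≤ (#(vertsOf F)).choose 3 := by
  rw [← card_powersetCard]
  exact card_le_card fun T hT => mem_powersetCard.2 ⟨subset_vertsOf hT, hF T hT⟩

lemma card_edges_sharing_triangle (hF : ∀ T ∈ F, #T = 3) (he : e ∈ edgesOf F) :
    #{e' ∈ (edgesOf F).erase e | e ∪ e' ∈ F} = 2 * edgeDegree F e := by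
  have he_card := card_of_mem_edgesOf he
  have h_maps : Set.MapsTo (e ∪ ·) ({e' ∈ (edgesOf F).erase e | e ∪ e' ∈ F} : Finset _)
      ({T ∈ F | e ⊆ T} : Finset _) := fun e' he' =>
    mem_filter.2 ⟨(mem_filter.1 he').2, subset_union_left⟩
  rw [card_eq_sum_card_fiberwise h_maps, edgeDegree, mul_comm]
  refine sum_const_nat fun T hT => ?_
  obtain ⟨hTF, heT⟩ := mem_filter.1 hT
  have h_fiber : {e' ∈ {e' ∈ (edgesOf F).erase e | e ∪ e' ∈ F} | e ∪ e' = T} =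
      (T.powersetCard 2).erase e := by
    ext e'
    simp only [mem_filter, mem_erase, mem_powersetCard]
    constructor
    · rintro ⟨⟨⟨hne, he'⟩, -⟩, rfl⟩
      exact ⟨hne, subset_union_right, card_of_mem_edgesOf he'⟩
    · rintro ⟨hne, he'T, he'⟩
      have h_union := union_eq_of_pair_subset (hF T hTF) he_card he' hne.symm heT he'T
      exact ⟨⟨⟨hne, mem_edgesOf.2 ⟨⟨T, hTF, he'T⟩, he'⟩⟩, h_union ▸ hTF⟩, h_union⟩
  rw [h_fiber, card_erase_of_mem (mem_powersetCard.2 ⟨heT, he_card⟩), card_powersetCard,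
    hF T hTF]
  rfl

end Edges

section UpLaplacian

variable {F : Finset (Finset ℕ)} {k : ℕ}

/-- The up-Laplacian `δ₁ᵀ δ₁` of a triangle family, acting on the edges of its support graph. -/
noncomputable def upLaplacian (F : Finset (Finset ℕ)) :
    Matrix {e // e ∈ edgesOf F} {e // e ∈ edgesOf F} ℝ :=
  (delta1 F)ᵀ * delta1 F

lemma upLaplacian_posSemidef (F : Finset (Finset ℕ)) : (upLaplacian F).PosSemidef :=
  posSemidef_conjTranspose_mul_self (delta1 F)

lemma upLaplacian_apply (e e' : {e // e ∈ edgesOf F}) :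
    upLaplacian F e e' = ∑ T ∈ F, triSign T e * triSign T e' := by
  rw [upLaplacian, mul_apply, ← sum_coe_sort F]
  rfl

lemma upLaplacian_apply_self (hF : ∀ T ∈ F, #T = 3) (e : {e // e ∈ edgesOf F}) :
    upLaplacian F e e = edgeDegree F e := by
  have h_term (T : Finset ℕ) (hT : T ∈ F) :
      triSign T e * triSign T e = if e.1 ⊆ T then 1 else 0 := by
    split_ifs with h
    · exact triSign_mul_self (hF T hT) (card_of_mem_edgesOf e.2) h
    · rw [triSign_of_not_subset h, zero_mul]
  rw [upLaplacian_apply, sum_congr rfl h_term, sum_boole, edgeDegree]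

lemma upLaplacian_ne_zero (hF : IsTriFam F) : upLaplacian F ≠ 0 := by
  obtain ⟨e, he⟩ := edgesOf_nonempty hF
  intro h_zero
  have h_deg := upLaplacian_apply_self hF.2 ⟨e, he⟩
  rw [h_zero, Matrix.zero_apply, eq_comm, Nat.cast_eq_zero] at h_deg
  exact (edgeDegree_pos he).ne' h_deg

lemma upLaplacian_apply_of_ne (hF : ∀ T ∈ F, #T = 3) {e e' : {e // e ∈ edgesOf F}} (h : e ≠ e') :
    upLaplacian F e e' = if e.1 ∪ e'.1 ∈ F then
      triSign (e.1 ∪ e'.1) e * triSign (e.1 ∪ e'.1) e' else 0 := by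
  have h_zero (T : Finset ℕ) (hT : T ∈ F) (hne : T ≠ e.1 ∪ e'.1) :
      triSign T e * triSign T e' = 0 := by
    by_contra h_prod
    obtain ⟨h_left, h_right⟩ := mul_ne_zero_iff.1 h_prod
    refine hne (union_eq_of_pair_subset (hF T hT) (card_of_mem_edgesOf e.2)
      (card_of_mem_edgesOf e'.2) (Subtype.coe_injective.ne h) ?_ ?_).symm
    · exact of_not_not (mt triSign_of_not_subset h_left)
    · exact of_not_not (mt triSign_of_not_subset h_right)
  rw [upLaplacian_apply]
  split_ifs with h_mem
  · exact sum_eq_single_of_mem _ h_mem h_zero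
  · exact sum_eq_zero fun T hT => h_zero T hT fun h_eq => h_mem (h_eq ▸ hT)

lemma upLaplacian_apply_sq_of_ne (hF : ∀ T ∈ F, #T = 3) {e e' : {e // e ∈ edgesOf F}}
    (h : e ≠ e') : upLaplacian F e e' ^ 2 = if e.1 ∪ e'.1 ∈ F then 1 else 0 := by
  rw [upLaplacian_apply_of_ne hF h]
  split_ifs with h_mem
  · rw [sq, mul_mul_mul_comm,
      triSign_mul_self (hF _ h_mem) (card_of_mem_edgesOf e.2) subset_union_left,
      triSign_mul_self (hF _ h_mem) (card_of_mem_edgesOf e'.2) subset_union_right, one_mul]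
  · norm_num

lemma upLaplacian_mul_self_apply_self (hF : ∀ T ∈ F, #T = 3) (e : {e // e ∈ edgesOf F}) :
    (upLaplacian F * upLaplacian F) e e = edgeDegree F e * (edgeDegree F e + 2) := by
  have h_symm (e' : {e // e ∈ edgesOf F}) : upLaplacian F e' e = upLaplacian F e e' :=
    (upLaplacian_posSemidef F).isHermitian.apply e e'
  have h_erase : (edgesOf F).erase e = (univ.erase e).map (.subtype _) := by
    rw [map_erase, univ_eq_attach, attach_map_val]
    rfl
  have h_off_diag : ∑ e' ∈ univ.erase e, upLaplacian F e e' ^ 2 = 2 * edgeDegree F e := by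
    calc ∑ e' ∈ univ.erase e, upLaplacian F e e' ^ 2
        = ∑ e' ∈ univ.erase e, if e.1 ∪ e'.1 ∈ F then (1 : ℝ) else 0 :=
          sum_congr rfl fun e' he' => upLaplacian_apply_sq_of_ne hF (ne_of_mem_erase he').symm
      _ = ∑ e' ∈ (edgesOf F).erase e, if e.1 ∪ e' ∈ F then (1 : ℝ) else 0 := by
          rw [h_erase, sum_map]
          rfl
      _ = 2 * edgeDegree F e := by
          rw [sum_boole, card_edges_sharing_triangle hF e.2]
          norm_cast
  rw [mul_apply, ← add_sum_erase _ _ (mem_univ e)]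
  simp only [h_symm, ← sq]
  rw [h_off_diag, upLaplacian_apply_self hF]
  ring

lemma lam_le_edgeDegree_add_two (hF : ∀ T ∈ F, #T = 3) {e : Finset ℕ} (he : e ∈ edgesOf F) :
    lam F ≤ edgeDegree F e + 2 := by
  have h_diag := (posSemidef_mul_self_sub_lambdaMinPos_smul
    (upLaplacian_posSemidef F)).diag_nonneg (i := ⟨e, he⟩)
  rw [Matrix.sub_apply, Matrix.smul_apply, upLaplacian_mul_self_apply_self hF,
    upLaplacian_apply_self hF, smul_eq_mul, mul_comm, ← sub_mul] at h_diag
  have h_pos : (0 : ℝ) < edgeDegree F e := by exact_mod_cast edgeDegree_pos he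
  exact sub_nonneg.1 (nonneg_of_mul_nonneg_left h_diag h_pos)

lemma le_edgeDegree_of_lt_lam (hF : ∀ T ∈ F, #T = 3) (hk : k + 1 < lam F) {e : Finset ℕ}
    (he : e ∈ edgesOf F) : k ≤ edgeDegree F e := by
  have h_lt : (k + 1 : ℝ) < edgeDegree F e + 2 := hk.trans_le (lam_le_edgeDegree_add_two hF he)
  have h_lt' : k + 1 < edgeDegree F e + 2 := by exact_mod_cast h_lt
  lia

end UpLaplacian

section Counting

variable {F : Finset (Finset ℕ)} {k n : ℕ}

lemma add_two_le_card_vertsOf_of_lt_lam (hF : IsTriFam F) (hk : k + 1 < lam F) :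
    k + 2 ≤ #(vertsOf F) := by
  obtain ⟨e, he⟩ := edgesOf_nonempty hF
  have := edgeDegree_add_two_le_card_vertsOf hF.2 he
  have := le_edgeDegree_of_lt_lam hF.2 hk he
  lia

lemma six_mul_choose_three (k : ℕ) : 6 * (k + 2).choose 3 = (k + 2) * (k + 1) * k := by
  have h := Nat.descFactorial_eq_factorial_mul_choose (k + 2) 3
  simp only [Nat.descFactorial_succ, Nat.descFactorial_zero, Nat.factorial] at h
  lia

lemma lam_le_of_card_lt_choose (hF : IsTriFam F) (hn : 1 ≤ n) (h : #F < (n + 1).choose 3) :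
    lam F ≤ n := by
  obtain ⟨k, rfl⟩ := Nat.exists_eq_add_of_le' hn
  push_cast
  by_contra! hk
  have h_verts := add_two_le_card_vertsOf_of_lt_lam hF hk
  have h_card := card_vertsOf_mul_mul_le hF.2 fun _ => le_edgeDegree_of_lt_lam hF.2 hk
  have : (k + 2) * (k + 1) * k ≤ 6 * #F := le_trans (by gcongr) h_card
  have := six_mul_choose_three k
  lia

lemma lam_le_of_choose_lt_card (hF : IsTriFam F) (h_lower : (k + 2).choose 3 < #F)
    (h_upper : 6 * #F < (k + 3) * (k + 1) * k) : lam F ≤ k + 1 := by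
  by_contra! hk
  have h_verts : k + 3 ≤ #(vertsOf F) := by
    refine (add_two_le_card_vertsOf_of_lt_lam hF hk).lt_of_ne fun h_eq => ?_
    exact h_lower.not_ge (h_eq ▸ card_le_choose_card_vertsOf hF.2)
  have h_card := card_vertsOf_mul_mul_le hF.2 fun _ => le_edgeDegree_of_lt_lam hF.2 hk
  exact h_upper.not_ge (le_trans (by gcongr) h_card)

end Counting

section Complete

variable {F : Finset (Finset ℕ)} {V : Finset ℕ}

/-- The signed vertex-edge incidence matrix `δ₀` of the support graph of a triangle family. -/
noncomputable def delta0 (F : Finset (Finset ℕ)) :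
    Matrix {e // e ∈ edgesOf F} {x // x ∈ vertsOf F} ℝ :=
  Matrix.of fun e x => edgeSign e x

lemma delta1_mul_delta0 (F : Finset (Finset ℕ)) : delta1 F * delta0 F = 0 := by
  ext ⟨T, hT⟩ ⟨x, _⟩
  rw [mul_apply]
  refine (sum_coe_sort (edgesOf F) fun e => triSign T e * edgeSign e x).trans ?_
  by_cases hT_card : #T = 3
  swap
  · exact sum_eq_zero fun e _ => by rw [triSign_of_card_ne hT_card, zero_mul]
  by_cases hx : x ∈ T
  swap
  · refine sum_eq_zero fun e _ => ?_
    by_cases heT : e ⊆ T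
    · rw [edgeSign_of_notMem fun hxe => hx (heT hxe), mul_zero]
    · rw [triSign_of_not_subset heT, zero_mul]
  obtain ⟨y, z, hxy, hxz, hyz, rfl⟩ := exists_eq_triple_of_mem hT_card hx
  have h_ne : ({x, y} : Finset ℕ) ≠ {x, z} := fun h => by
    have : y ∈ ({x, z} : Finset ℕ) := h ▸ mem_insert_of_mem (mem_singleton_self y)
    grind
  have h_sub : ({{x, y}, {x, z}} : Finset (Finset ℕ)) ⊆ edgesOf F := by
    simp only [insert_subset_iff, singleton_subset_iff, mem_edgesOf, card_pair hxy,
      card_pair hxz, and_true]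
    exact ⟨⟨_, hT, by grind⟩, ⟨_, hT, by grind⟩⟩
  rw [← sum_subset h_sub, sum_pair h_ne, triSign_mul_edgeSign_add hxy hxz hyz, Matrix.zero_apply]
  intro e he h_notMem
  by_cases hxe : x ∈ e
  · obtain ⟨w, hxw, rfl⟩ := exists_eq_pair_of_mem (card_of_mem_edgesOf he) hxe
    have h_not_subset : ¬ {x, w} ⊆ ({x, y, z} : Finset ℕ) := fun h => by
      have hw : w ∈ ({x, y, z} : Finset ℕ) := h (by grind)
      rcases mem_insert.1 hw with rfl | hw
      · exact hxw rfl
      · grind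
    rw [triSign_of_not_subset h_not_subset, zero_mul]
  · rw [edgeSign_of_notMem hxe, mul_zero]

lemma delta0_mul_transpose_apply (e e' : {e // e ∈ edgesOf F}) :
    (delta0 F * (delta0 F)ᵀ) e e' = ∑ x ∈ e.1 ∩ e'.1, edgeSign e x * edgeSign e' x := by
  rw [mul_apply]
  refine (sum_coe_sort (vertsOf F) fun x => edgeSign e x * edgeSign e' x).trans ?_
  refine (sum_subset (inter_subset_left.trans (subset_vertsOf_of_mem_edgesOf e.2)) ?_).symm
  intro x _ hx
  rcases not_and_or.1 (mt mem_inter.2 hx) with hxe | hxe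
  · rw [edgeSign_of_notMem hxe, zero_mul]
  · rw [edgeSign_of_notMem hxe, mul_zero]

lemma isTriFam_powersetCard (hV : 3 ≤ #V) : IsTriFam (V.powersetCard 3) :=
  ⟨powersetCard_nonempty.2 hV, fun _ hT => (mem_powersetCard.1 hT).2⟩

lemma subset_of_mem_edgesOf_powersetCard {e : Finset ℕ} (he : e ∈ edgesOf (V.powersetCard 3)) :
    e ⊆ V :=
  have ⟨⟨_, hT, heT⟩, _⟩ := mem_edgesOf.1 he
  heT.trans (mem_powersetCard.1 hT).1

lemma edgeDegree_powersetCard_add_two {e : Finset ℕ} (heV : e ⊆ V) (he : #e = 2) :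
    edgeDegree (V.powersetCard 3) e + 2 = #V := by
  rw [edgeDegree_eq_card_apexes (fun _ hT => (mem_powersetCard.1 hT).2)
    (fun _ hT => (mem_powersetCard.1 hT).1) he, filter_true_of_mem, ← he,
    card_sdiff_add_card_eq_card heV]
  intro z hz
  rw [mem_sdiff] at hz
  exact mem_powersetCard.2 ⟨insert_subset hz.1 heV, by rw [card_insert_of_notMem hz.2, he]⟩

lemma upLaplacian_add_downLaplacian_apply_self (e : {e // e ∈ edgesOf (V.powersetCard 3)}) :
    upLaplacian (V.powersetCard 3) e e +
      (delta0 (V.powersetCard 3) * (delta0 (V.powersetCard 3))ᵀ) e e = #V := by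
  have he_card := card_of_mem_edgesOf e.2
  have h_down : ∑ x ∈ e.1, edgeSign e x * edgeSign e x = 2 := by
    rw [sum_congr rfl fun x => edgeSign_mul_self, sum_const, he_card]
    norm_num
  rw [upLaplacian_apply_self fun _ hT => (mem_powersetCard.1 hT).2, delta0_mul_transpose_apply,
    inter_self, h_down,
    ← edgeDegree_powersetCard_add_two (subset_of_mem_edgesOf_powersetCard e.2) he_card]
  norm_cast

lemma upLaplacian_add_downLaplacian_apply_of_ne
    {e e' : {e // e ∈ edgesOf (V.powersetCard 3)}} (h : e ≠ e') :
    upLaplacian (V.powersetCard 3) e e' +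
      (delta0 (V.powersetCard 3) * (delta0 (V.powersetCard 3))ᵀ) e e' = 0 := by
  rw [upLaplacian_apply_of_ne (fun _ hT => (mem_powersetCard.1 hT).2) h,
    delta0_mul_transpose_apply]
  obtain ⟨e, he⟩ := e
  obtain ⟨e', he'⟩ := e'
  have h_sub : e ∪ e' ⊆ V := union_subset (subset_of_mem_edgesOf_powersetCard he)
    (subset_of_mem_edgesOf_powersetCard he')
  have he_card := card_of_mem_edgesOf he
  have he'_card := card_of_mem_edgesOf he'
  rcases (e ∩ e').eq_empty_or_nonempty with h_disj | ⟨x, hx⟩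
  · have h_card : #(e ∪ e') = 4 := by
      rw [card_union_of_disjoint (disjoint_iff_inter_eq_empty.2 h_disj), he_card, he'_card]
    have h_notMem : e ∪ e' ∉ V.powersetCard 3 := fun h_mem => by
      have := (mem_powersetCard.1 h_mem).2
      lia
    rw [if_neg h_notMem, h_disj, sum_empty, add_zero]
  · obtain ⟨hxe, hxe'⟩ := mem_inter.1 hx
    obtain ⟨y, hxy, rfl⟩ := exists_eq_pair_of_mem he_card hxe
    obtain ⟨z, hxz, rfl⟩ := exists_eq_pair_of_mem he'_card hxe'
    have hyz : y ≠ z := fun hyz => h (by simp only [hyz])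
    have h_union : ({x, y} ∪ {x, z} : Finset ℕ) = {x, y, z} := by grind
    have h_inter : ({x, y} ∩ {x, z} : Finset ℕ) = {x} := by grind
    have h_mem : {x, y, z} ∈ V.powersetCard 3 := mem_powersetCard.2
      ⟨h_union ▸ h_sub, card_eq_three.2 ⟨x, y, z, hxy, hxz, hyz, rfl⟩⟩
    simp only [h_union, h_inter, if_pos h_mem, sum_singleton]
    exact triSign_mul_triSign_add_edgeSign_mul_edgeSign hxy hxz hyz

lemma upLaplacian_add_downLaplacian_powersetCard (V : Finset ℕ) :
    upLaplacian (V.powersetCard 3) + delta0 (V.powersetCard 3) * (delta0 (V.powersetCard 3))ᵀ =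
      (#V : ℝ) • 1 := by
  ext e e'
  rw [Matrix.add_apply, Matrix.smul_apply]
  by_cases h : e = e'
  · rw [h, upLaplacian_add_downLaplacian_apply_self, one_apply_eq, smul_eq_mul, mul_one]
  · rw [upLaplacian_add_downLaplacian_apply_of_ne h, one_apply_ne h, smul_zero]

lemma upLaplacian_powersetCard_mul_self (V : Finset ℕ) :
    upLaplacian (V.powersetCard 3) * upLaplacian (V.powersetCard 3) =
      (#V : ℝ) • upLaplacian (V.powersetCard 3) := by
  have h_mul_delta0 : upLaplacian (V.powersetCard 3) * delta0 (V.powersetCard 3) = 0 := by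
    rw [upLaplacian, Matrix.mul_assoc, delta1_mul_delta0, Matrix.mul_zero]
  have h_sum := congrArg (upLaplacian (V.powersetCard 3) * ·)
    (upLaplacian_add_downLaplacian_powersetCard V)
  simpa only [Matrix.mul_add, ← Matrix.mul_assoc, h_mul_delta0, Matrix.zero_mul, add_zero,
    Matrix.mul_smul, Matrix.mul_one] using h_sum

lemma lam_powersetCard (hV : 3 ≤ #V) : lam (V.powersetCard 3) = #V :=
  lambdaMinPos_eq_of_mul_self_eq_smul (by norm_cast; lia)
    (upLaplacian_ne_zero (isTriFam_powersetCard hV)) (upLaplacian_powersetCard_mul_self V)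

end Complete

section Phi

variable {t n : ℕ} {c : ℝ}

lemma phi_le (hc : 0 ≤ c) (h : ∀ F, IsTriFam F → #F = t → lam F ≤ c) : phi t ≤ c :=
  Real.sSup_le (by rintro _ ⟨F, hF, hF_card, rfl⟩; exact h F hF hF_card) hc

lemma lam_le_card_add_two {F : Finset (Finset ℕ)} (hF : IsTriFam F) : lam F ≤ #F + 2 := by
  obtain ⟨e, he⟩ := edgesOf_nonempty hF
  have h_deg : edgeDegree F e ≤ #F := card_filter_le F _
  exact (lam_le_edgeDegree_add_two hF.2 he).trans (by gcongr)

lemma lam_le_phi {F : Finset (Finset ℕ)} (hF : IsTriFam F) : lam F ≤ phi #F := by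
  refine le_csSup ⟨#F + 2, ?_⟩ ⟨F, hF, rfl, rfl⟩
  rintro _ ⟨G, hG, hG_card, rfl⟩
  exact hG_card ▸ lam_le_card_add_two hG

lemma phi_le_of_lt_choose (hn : 1 ≤ n) (ht : t < (n + 1).choose 3) : phi t ≤ n :=
  phi_le n.cast_nonneg fun _ hF hF_card => lam_le_of_card_lt_choose hF hn (hF_card ▸ ht)

lemma phi_choose_three (hn : 3 ≤ n) : phi (n.choose 3) = n := by
  refine le_antisymm (phi_le_of_lt_choose (by lia) ?_) ?_
  · rw [Nat.choose_succ_succ]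
    exact Nat.lt_add_of_pos_left (Nat.choose_pos (by lia))
  · have hV : 3 ≤ #(range n) := by rwa [card_range]
    simpa only [lam_powersetCard hV, card_powersetCard, card_range] using
      lam_le_phi (isTriFam_powersetCard hV)

lemma phi_le_of_choose_lt {k : ℕ} (h_lower : (k + 2).choose 3 < t)
    (h_upper : 6 * t < (k + 3) * (k + 1) * k) : phi t ≤ k + 1 :=
  phi_le (by positivity) fun _ hF hF_card =>
    lam_le_of_choose_lt_card hF (hF_card ▸ h_lower) (hF_card ▸ h_upper)

lemma phi_choose_three_add_one_le (hn : 5 ≤ n) : phi (n.choose 3 + 1) ≤ n - 1 := by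
  obtain ⟨k, rfl⟩ := Nat.exists_eq_add_of_le' (show 2 ≤ n by lia)
  have h_upper : 6 * ((k + 2).choose 3 + 1) < (k + 3) * (k + 1) * k := by
    have := six_mul_choose_three k
    nlinarith
  refine (phi_le_of_choose_lt (Nat.lt_succ_self _) h_upper).trans_eq ?_
  push_cast
  ring

lemma phi_choose_three_add_one_lt (hn : 5 ≤ n) : phi (n.choose 3 + 1) < phi (n.choose 3) := by
  rw [phi_choose_three (by lia)]
  exact (phi_choose_three_add_one_le hn).trans_lt (sub_one_lt _)

lemma choose_three_add_one_lt (hn : 3 ≤ n) : n.choose 3 + 1 < (n + 1).choose 3 := by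
  have h_three_le : 3 ≤ n.choose 2 := Nat.choose_le_choose 2 hn
  rw [Nat.choose_succ_succ]
  lia

end Phi

/-- `φ` is not monotone: for every `n ≥ 6`, with `n₁ = C(n,3)`, `n₂ = C(n,3) + 1` and
`n₃ = C(n+1,3)`, we have `n₁ < n₂ < n₃`, `φ(n₁) = n`, `φ(n₂) ≤ n - 1`, `φ(n₃) = n + 1`,
hence `φ(n₂) < φ(n₁) < φ(n₃)`. -/
theorem stmt13 :
    (¬ Monotone phi) ∧
    ∀ n : ℕ, 6 ≤ n →
      n.choose 3 < n.choose 3 + 1 ∧ n.choose 3 + 1 < (n + 1).choose 3 ∧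
      phi (n.choose 3) = (n : ℝ) ∧
      phi (n.choose 3 + 1) ≤ (n : ℝ) - 1 ∧
      phi ((n + 1).choose 3) = (n : ℝ) + 1 ∧
      phi (n.choose 3 + 1) < phi (n.choose 3) ∧
      phi (n.choose 3) < phi ((n + 1).choose 3) := by
  refine ⟨fun h_mono => ?_, fun n hn => ?_⟩
  · exact (h_mono (Nat.le_succ (Nat.choose 5 3))).not_gt (phi_choose_three_add_one_lt le_rfl)
  · have h_phi : phi (n.choose 3) = n := phi_choose_three (by lia)
    have h_phi_succ : phi ((n + 1).choose 3) = n + 1 := by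
      exact_mod_cast phi_choose_three (n := n + 1) (by lia)
    exact ⟨Nat.lt_succ_self _, choose_three_add_one_lt (by lia), h_phi,
      phi_choose_three_add_one_le (by lia), h_phi_succ, phi_choose_three_add_one_lt (by lia),
      by rw [h_phi, h_phi_succ]; exact lt_add_one _⟩
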